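/- Let κ, c_s, c_p > 0 and n ∈ ℕ. Then there exist ε > 0 and M > 0 such that for all 0 < r < ε, |ξ̃_{2,n}(r)| ≤ M r²; in particular ξ̃_{2,n}(r) → 0 as r → 0⁺. -/

import Mathlib

open Real Filter MeasureTheory

noncomputable def acoef (γ : ℝ) : ℕ → ℕ → ℝ
  | n, m =>
    if m = 0 then 1
    else if n < m then 0
    else if m = n then -(γ / (n : ℝ)) * acoef γ (n - 1) (n - 1)
    else (1 / (2 * γ * (m : ℝ))) *
      (4 * (((m + 1) / 2 : ℕ) : ℝ) ^ 2 * acoef γ n (m + 1)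
        - γ ^ 2 * ∑ k ∈ (Finset.Icc (m - 1) (n - 1)).attach,
            ((n - (k : ℕ) + 1 : ℕ) : ℝ) * acoef γ (k : ℕ) (m - 1))
  termination_by n m => (n, n - m)
  decreasing_by
  · apply Prod.Lex.left; omega
  · apply Prod.Lex.right; omega
  · apply Prod.Lex.left
    have hk := k.2
    simp only [Finset.mem_Icc] at hk
    omega

/-- χ_{k,n} -/
noncomputable def chiC (n : ℕ) (k : ℤ) : ℝ :=
  if k = -2 then (n : ℝ) * ((n : ℝ) - 1)
  else if k = -1 then -4 * (n : ℝ) ^ 2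
  else if k = 0 then 2 * (3 * (n : ℝ) ^ 2 + 3 * (n : ℝ) + 1)
  else if k = 1 then -4 * ((n : ℝ) + 1) ^ 2
  else if k = 2 then ((n : ℝ) + 1) * ((n : ℝ) + 2)
  else 0

/-- the sum ∑_{k=-2}^{2} χ_{k,n} f(n+k), terms with n+k<0 omitted -/
noncomputable def sumChi (n : ℕ) (f : ℕ → ℝ) : ℝ :=
  ∑ k ∈ Finset.Icc (-2 : ℤ) 2,
    if 0 ≤ (n : ℤ) + k then chiC n k * f ((n : ℤ) + k).toNat else 0

noncomputable def besselI0 (z : ℝ) : ℝ := ∑' k : ℕ, (z / 2) ^ (2 * k) / (k.factorial : ℝ) ^ 2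

noncomputable def besselI1 (z : ℝ) : ℝ :=
  ∑' k : ℕ, (z / 2) ^ (2 * k + 1) / ((k.factorial : ℝ) * ((k + 1).factorial : ℝ))

noncomputable def psiH (k : ℕ) : ℝ := ∑ j ∈ Finset.range k, (1 : ℝ) / ((j : ℝ) + 1)

noncomputable def besselS0 (z : ℝ) : ℝ :=
  ∑' k : ℕ, psiH k * (z / 2) ^ (2 * k) / (k.factorial : ℝ) ^ 2

noncomputable def besselS1 (z : ℝ) : ℝ :=
  -(1 / 2) * ∑' k : ℕ, (psiH (k + 1) + psiH k) * (z / 2) ^ (2 * k + 1) /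
    ((k.factorial : ℝ) * ((k + 1).factorial : ℝ))

noncomputable def vPol (γ : ℝ) (n : ℕ) (r : ℝ) : ℝ :=
  ∑ m ∈ Finset.range (n / 2 + 1), acoef γ n (2 * m) * r ^ (2 * m)

noncomputable def wPol (γ : ℝ) (n : ℕ) (r : ℝ) : ℝ :=
  ∑ m ∈ Finset.range ((n - 1) / 2 + 1), acoef γ n (2 * m + 1) * r ^ (2 * m + 1)

noncomputable def vTil (γ : ℝ) (n : ℕ) (r : ℝ) : ℝ :=
  2 * ∑ m ∈ Finset.Icc 1 (n / 2), (m : ℝ) * acoef γ n (2 * m) * r ^ (2 * m)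
    - γ * ∑ m ∈ Finset.range ((n - 1) / 2 + 1), acoef γ n (2 * m + 1) * r ^ (2 * m + 2)

noncomputable def wTil (γ : ℝ) (n : ℕ) (r : ℝ) : ℝ :=
  2 * ∑ m ∈ Finset.Icc 1 ((n - 1) / 2), (m : ℝ) * acoef γ n (2 * m + 1) * r ^ (2 * m + 1)
    - γ * ∑ m ∈ Finset.range (n / 2 + 1), acoef γ n (2 * m) * r ^ (2 * m + 1)

noncomputable def phiF (γ : ℝ) (n : ℕ) (r : ℝ) : ℝ :=
  -besselI0 (γ * r) * vPol γ n r + besselI1 (γ * r) * wPol γ n r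

noncomputable def phiHat (γ : ℝ) (n : ℕ) (r : ℝ) : ℝ :=
  (-(Real.eulerMascheroniConstant + Real.log (γ / 2)) * besselI0 (γ * r) + besselS0 (γ * r)) * vPol γ n r
    + (1 / (γ * r) + (Real.eulerMascheroniConstant + Real.log (γ / 2)) * besselI1 (γ * r)
        + besselS1 (γ * r)) * wPol γ n r

noncomputable def phiTil (γ : ℝ) (n : ℕ) (r : ℝ) : ℝ :=
  -besselI0 (γ * r) * vTil γ n r + besselI1 (γ * r) * wTil γ n r

noncomputable def phiHatTil (γ : ℝ) (n : ℕ) (r : ℝ) : ℝ :=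
  (-(Real.eulerMascheroniConstant + Real.log (γ / 2)) * besselI0 (γ * r) + besselS0 (γ * r)) * vTil γ n r
    + (1 / (γ * r) + (Real.eulerMascheroniConstant + Real.log (γ / 2)) * besselI1 (γ * r)
        + besselS1 (γ * r)) * wTil γ n r

noncomputable def etaF (κ cs cp : ℝ) (ℓ n : ℕ) (r : ℝ) : ℝ :=
  (-(ℓ : ℝ)) ^ (ℓ - 1) / (κ ^ 2 * r ^ 2) *
      sumChi n (fun j => phiF (κ / cs) j r - phiF (κ / cp) j r)
    + (-1 : ℝ) ^ (ℓ - 1) / cp ^ 2 * phiF (κ / cp) n r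
    + ((ℓ : ℝ) - 1) / cs ^ 2 * phiF (κ / cs) n r

noncomputable def xiF (κ cs cp : ℝ) (ℓ n : ℕ) (r : ℝ) : ℝ :=
  (-(ℓ : ℝ)) ^ (ℓ - 1) / (κ ^ 2 * r ^ 2) *
      sumChi n (fun j => phiHat (κ / cs) j r - phiHat (κ / cp) j r)
    + (-1 : ℝ) ^ (ℓ - 1) / cp ^ 2 * phiHat (κ / cp) n r
    + ((ℓ : ℝ) - 1) / cs ^ 2 * phiHat (κ / cs) n r

noncomputable def etaTil (κ cs cp : ℝ) (ℓ n : ℕ) (r : ℝ) : ℝ :=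
  (-(ℓ : ℝ)) ^ (ℓ - 1) / (κ ^ 2 * r ^ 2) *
      sumChi n (fun j => phiTil (κ / cs) j r - 2 * phiF (κ / cs) j r
        + 2 * phiF (κ / cp) j r - phiTil (κ / cp) j r)
    + (-1 : ℝ) ^ (ℓ - 1) / cp ^ 2 * phiTil (κ / cp) n r
    + ((ℓ : ℝ) - 1) / cs ^ 2 * phiTil (κ / cs) n r

noncomputable def xiTil (κ cs cp : ℝ) (ℓ n : ℕ) (r : ℝ) : ℝ :=
  (-(ℓ : ℝ)) ^ (ℓ - 1) / (κ ^ 2 * r ^ 2) *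
      sumChi n (fun j => phiHatTil (κ / cs) j r - 2 * phiHat (κ / cs) j r
        + 2 * phiHat (κ / cp) j r - phiHatTil (κ / cp) j r)
    + (-1 : ℝ) ^ (ℓ - 1) / cp ^ 2 * phiHatTil (κ / cp) n r
    + ((ℓ : ℝ) - 1) / cs ^ 2 * phiHatTil (κ / cs) n r

/-- Even expansion to second order at `0⁺` with remainder `O(r⁴)`. -/
def EvenExp (f : ℝ → ℝ) (a b : ℝ) : Prop :=
  (fun r => f r - (a + b * r ^ 2)) =O[nhdsWithin 0 (Set.Ioi 0)] (fun r : ℝ => r ^ 4)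

lemma EvenExp.congr {f g : ℝ → ℝ} {a b a' b' : ℝ} (h : EvenExp f a b)
    (hfg : ∀ r, 0 < r → g r = f r) (ha : a' = a) (hb : b' = b) : EvenExp g a' b' := by
  subst ha hb
  refine Asymptotics.IsBigO.congr' h ?_ Filter.EventuallyEq.rfl
  filter_upwards [self_mem_nhdsWithin] with r hr
  rw [hfg r hr]

lemma EvenExp.add {f g : ℝ → ℝ} {a b c d : ℝ} (hf : EvenExp f a b) (hg : EvenExp g c d) :
    EvenExp (fun r => f r + g r) (a + c) (b + d) := by
  refine (Asymptotics.IsBigO.add hf hg).congr_left ?_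
  intro r; ring

lemma EvenExp.const (c : ℝ) : EvenExp (fun _ => c) c 0 := by
  refine (Asymptotics.isBigO_zero _ _).congr_left ?_
  intro r; ring

lemma EvenExp.cmul {f : ℝ → ℝ} {a b : ℝ} (c : ℝ) (hf : EvenExp f a b) :
    EvenExp (fun r => c * f r) (c * a) (c * b) := by
  refine (Asymptotics.IsBigO.const_mul_left hf c).congr_left ?_
  intro r; ring

lemma EvenExp.sub {f g : ℝ → ℝ} {a b c d : ℝ} (hf : EvenExp f a b) (hg : EvenExp g c d) :
    EvenExp (fun r => f r - g r) (a - c) (b - d) := by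
  refine (Asymptotics.IsBigO.sub hf hg).congr_left ?_
  intro r; ring

lemma isBigO_pow_one (k : ℕ) :
    (fun r : ℝ => r ^ k) =O[nhdsWithin 0 (Set.Ioi 0)] (fun _ => (1 : ℝ)) := by
  have h : Tendsto (fun r : ℝ => r ^ k) (nhdsWithin 0 (Set.Ioi 0)) (nhds (0 ^ k)) :=
    ((continuous_pow k).tendsto 0).mono_left nhdsWithin_le_nhds
  exact h.isBigO_one ℝ

lemma EvenExp.bounded {f : ℝ → ℝ} {a b : ℝ} (hf : EvenExp f a b) :
    f =O[nhdsWithin 0 (Set.Ioi 0)] (fun _ => (1 : ℝ)) := by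
  have h1 := Asymptotics.IsBigO.trans hf (isBigO_pow_one 4)
  have h2 : (fun r : ℝ => a + b * r ^ 2) =O[nhdsWithin 0 (Set.Ioi 0)] (fun _ => (1 : ℝ)) :=
    (Asymptotics.isBigO_const_const a one_ne_zero _).add ((isBigO_pow_one 2).const_mul_left b)
  refine (h1.add h2).congr_left ?_
  intro r; ring

lemma EvenExp.mul {f g : ℝ → ℝ} {a b c d : ℝ} (hf : EvenExp f a b) (hg : EvenExp g c d) :
    EvenExp (fun r => f r * g r) (a * c) (a * d + b * c) := by
  have h1 : (fun r => f r * (g r - (c + d * r ^ 2))) =O[nhdsWithin 0 (Set.Ioi 0)]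
      (fun r : ℝ => r ^ 4) := by
    simpa using hf.bounded.mul hg
  have h2 : (fun r => (c + d * r ^ 2) * (f r - (a + b * r ^ 2))) =O[nhdsWithin 0 (Set.Ioi 0)]
      (fun r : ℝ => r ^ 4) := by
    have h3 : (fun r : ℝ => c + d * r ^ 2) =O[nhdsWithin 0 (Set.Ioi 0)] (fun _ => (1 : ℝ)) :=
      (Asymptotics.isBigO_const_const c one_ne_zero _).add ((isBigO_pow_one 2).const_mul_left d)
    simpa using h3.mul hf
  have h4 : (fun r : ℝ => (b * d) * r ^ 4) =O[nhdsWithin 0 (Set.Ioi 0)] (fun r : ℝ => r ^ 4) :=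
    (Asymptotics.isBigO_refl _ _).const_mul_left _
  refine ((h1.add h2).add h4).congr_left ?_
  intro r; ring

lemma EvenExp.sq : EvenExp (fun r => r ^ 2) 0 1 := by
  refine (Asymptotics.isBigO_zero _ _).congr_left ?_
  intro r; ring

lemma EvenExp.sum {ι : Type} (s : Finset ι) {F : ι → ℝ → ℝ} {A B : ι → ℝ}
    (h : ∀ i ∈ s, EvenExp (F i) (A i) (B i)) :
    EvenExp (fun r => ∑ i ∈ s, F i r) (∑ i ∈ s, A i) (∑ i ∈ s, B i) := by
  refine (Asymptotics.IsBigO.sum h).congr_left ?_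
  intro r
  rw [Finset.sum_apply, Finset.sum_sub_distrib, Finset.sum_add_distrib, Finset.sum_mul]

lemma EvenExp.pow_ge {k : ℕ} (hk : 2 ≤ k) : EvenExp (fun r => r ^ (2 * k)) 0 0 := by
  obtain ⟨j, rfl⟩ := Nat.exists_eq_add_of_le hk
  have h : (fun r : ℝ => r ^ 4 * r ^ (2 * j)) =O[nhdsWithin 0 (Set.Ioi 0)]
      (fun r : ℝ => r ^ 4) := by
    simpa using (Asymptotics.isBigO_refl (fun r : ℝ => r ^ 4) _).mul (isBigO_pow_one (2 * j))
  refine h.congr_left ?_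
  intro r; ring

lemma EvenExp.poly (c : ℕ → ℝ) (N : ℕ) (h : ∀ m, N ≤ m → c m = 0) :
    EvenExp (fun r => ∑ m ∈ Finset.range N, c m * r ^ (2 * m)) (c 0) (c 1) := by
  have key : ∀ r : ℝ, ∑ m ∈ Finset.range N, c m * r ^ (2 * m)
      = ∑ m ∈ Finset.range (N + 2), c m * r ^ (2 * m) := by
    intro r
    rw [Finset.sum_range_succ, Finset.sum_range_succ, h N le_rfl, h (N + 1) (by omega)]
    ring
  have hs : EvenExp (fun r => ∑ m ∈ Finset.range N, c (m + 2) * r ^ (2 * (m + 2)))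
      (∑ m ∈ Finset.range N, c (m + 2) * 0) (∑ m ∈ Finset.range N, c (m + 2) * 0) :=
    EvenExp.sum _ fun m _ => (EvenExp.pow_ge (by omega)).cmul _
  refine ((hs.add (EvenExp.sq.cmul (c 1))).add (EvenExp.const (c 0))).congr ?_ ?_ ?_
  · intro r _
    simp only [key r, Finset.sum_range_succ', Nat.add_assoc, Nat.reduceAdd]
    ring
  · simp
  · simp

lemma EvenExp.series (c : ℕ → ℝ) (hc : ∀ k, |c k| ≤ 2) (g : ℝ) :
    EvenExp (fun r => ∑' k, c k * (g * r) ^ (2 * k)) (c 0) (c 1 * g ^ 2) := by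
  have hsum : ∀ x : ℝ, |x| ≤ 1 / 2 → ∀ j, Summable (fun k => c (k + j) * x ^ (2 * k)) ∧
      |∑' k, c (k + j) * x ^ (2 * k)| ≤ 4 := by
    intro x hx j
    have hb : ∀ k, ‖c (k + j) * x ^ (2 * k)‖ ≤ 2 * (1 / 2 : ℝ) ^ k := by
      intro k
      rw [norm_mul, Real.norm_eq_abs, Real.norm_eq_abs, pow_mul, abs_pow]
      have h2 : |x ^ 2| ≤ 1 / 2 := by
        rw [abs_pow]; nlinarith [abs_nonneg x]
      gcongr
      exact hc _
    have hs : HasSum (fun k : ℕ => 2 * (1 / 2 : ℝ) ^ k) 4 := by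
      have := hasSum_geometric_two.mul_left 2
      norm_num at this ⊢
      exact this
    exact ⟨Summable.of_norm_bounded hs.summable hb, tsum_of_norm_bounded hs hb⟩
  have hev : ∀ᶠ r : ℝ in nhdsWithin 0 (Set.Ioi 0), |g * r| ≤ 1 / 2 := by
    have ht : Tendsto (fun r : ℝ => |g * r|) (nhdsWithin 0 (Set.Ioi 0)) (nhds |g * 0|) :=
      ((by fun_prop : Continuous fun r : ℝ => |g * r|).tendsto 0).mono_left nhdsWithin_le_nhds
    rw [mul_zero, abs_zero] at ht
    exact ht.eventually (Iic_mem_nhds (by norm_num))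
  refine Asymptotics.IsBigO.of_bound (4 * g ^ 4) ?_
  filter_upwards [hev] with r hr
  have e : ∑' k, c k * (g * r) ^ (2 * k)
      = c 0 + c 1 * (g * r) ^ 2 + (g * r) ^ 4 * ∑' k, c (k + 2) * (g * r) ^ (2 * k) := by
    rw [← Summable.sum_add_tsum_nat_add 2 (by simpa using (hsum _ hr 0).1), ← tsum_mul_left]
    congr 1
    · simp [Finset.sum_range_succ]
    · congr 1; ext k; ring
  rw [e, show c 0 + c 1 * (g * r) ^ 2 + (g * r) ^ 4 * ∑' k, c (k + 2) * (g * r) ^ (2 * k)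
      - (c 0 + c 1 * g ^ 2 * r ^ 2) = (g * r) ^ 4 * ∑' k, c (k + 2) * (g * r) ^ (2 * k) by ring,
    norm_mul, Real.norm_eq_abs, Real.norm_eq_abs, Real.norm_eq_abs]
  have h4 := (hsum _ hr 2).2
  rw [abs_of_nonneg (by positivity : (0 : ℝ) ≤ (g * r) ^ 4),
    abs_of_nonneg (by positivity : (0 : ℝ) ≤ r ^ 4)]
  have : (0 : ℝ) ≤ (g * r) ^ 4 := by positivity
  calc _ ≤ (g * r) ^ 4 * 4 := by gcongr
    _ = _ := by ring

lemma psiH_nonneg (k : ℕ) : 0 ≤ psiH k := by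
  unfold psiH; positivity

lemma psiH_le (k : ℕ) : psiH k ≤ k.factorial := by
  have : psiH k ≤ k := by
    unfold psiH
    calc _ ≤ ∑ j ∈ Finset.range k, (1 : ℝ) := by
          refine Finset.sum_le_sum fun j _ => ?_
          rw [div_le_one (by positivity)]
          have : (0 : ℝ) ≤ j := by positivity
          linarith
      _ = k := by simp
  exact this.trans (by exact_mod_cast Nat.self_le_factorial k)

lemma one_le_fact (k : ℕ) : (1 : ℝ) ≤ k.factorial := by
  exact_mod_cast Nat.factorial_pos k

lemma exp_I0 (g : ℝ) : EvenExp (fun r => besselI0 (g * r)) 1 (g ^ 2 / 4) := by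
  refine (EvenExp.series (fun k => 1 / (k.factorial : ℝ) ^ 2) ?_ (g / 2)).congr ?_ ?_ ?_
  · intro k
    have := one_le_fact k
    rw [abs_of_nonneg (by positivity), div_le_iff₀ (by positivity)]
    nlinarith
  · intro r _
    unfold besselI0
    congr 1; ext k
    rw [show g * r / 2 = g / 2 * r by ring]; ring
  · simp
  · simp; ring

lemma exp_S0 (g : ℝ) : EvenExp (fun r => besselS0 (g * r)) 0 (g ^ 2 / 4) := by
  refine (EvenExp.series (fun k => psiH k / (k.factorial : ℝ) ^ 2) ?_ (g / 2)).congr ?_ ?_ ?_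
  · intro k
    have := one_le_fact k
    have := psiH_le k
    have := psiH_nonneg k
    rw [abs_of_nonneg (by positivity), div_le_iff₀ (by positivity)]
    nlinarith
  · intro r _
    unfold besselS0
    congr 1; ext k
    rw [show g * r / 2 = g / 2 * r by ring]; ring
  · simp [psiH]
  · simp [psiH]; ring

/-- `I₁(γ r) = r * (γ/2 + …)`. -/
lemma exp_I1 (g : ℝ) : ∃ f b, EvenExp f (g / 2) b ∧ ∀ r, besselI1 (g * r) = r * f r := by
  have h := (EvenExp.series (fun k => 1 / ((k.factorial : ℝ) * ((k + 1).factorial : ℝ))) ?_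
    (g / 2)).cmul (g / 2)
  · refine ⟨_, _, h.congr (fun _ _ => rfl) (by simp) rfl, ?_⟩
    intro r
    unfold besselI1
    rw [← tsum_mul_left, ← tsum_mul_left]
    congr 1; ext k
    rw [show g * r / 2 = g / 2 * r by ring]; ring
  · intro k
    have := one_le_fact k
    have := one_le_fact (k + 1)
    rw [abs_of_nonneg (by positivity), div_le_iff₀ (by positivity)]
    nlinarith

lemma exp_S1 (g : ℝ) : ∃ f b, EvenExp f (-g / 4) b ∧ ∀ r, besselS1 (g * r) = r * f r := by
  have h := (EvenExp.series (fun k => (psiH (k + 1) + psiH k) /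
    ((k.factorial : ℝ) * ((k + 1).factorial : ℝ))) ?_ (g / 2)).cmul (-g / 4)
  · refine ⟨_, _, h.congr (fun _ _ => rfl) (by simp [psiH]) rfl, ?_⟩
    intro r
    unfold besselS1
    rw [← tsum_mul_left, ← tsum_mul_left, ← tsum_mul_left]
    congr 1; ext k
    rw [show g * r / 2 = g / 2 * r by ring]; ring
  · intro k
    have := one_le_fact k
    have := one_le_fact (k + 1)
    have := psiH_le k
    have := psiH_nonneg k
    have := psiH_le (k + 1)
    have := psiH_nonneg (k + 1)
    rw [abs_of_nonneg (by positivity), div_le_iff₀ (by positivity)]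
    nlinarith [mul_nonneg (sub_nonneg.2 (one_le_fact k)) (sub_nonneg.2 (one_le_fact (k + 1)))]

lemma acoef_zero (g : ℝ) (n : ℕ) : acoef g n 0 = 1 := by
  rw [acoef]; simp

lemma acoef_gt (g : ℝ) {n m : ℕ} (h : n < m) : acoef g n m = 0 := by
  rw [acoef]; simp [h, show m ≠ 0 by omega]

lemma acoef_diag (g : ℝ) (n : ℕ) :
    acoef g (n + 1) (n + 1) = -(g / ((n + 1 : ℕ) : ℝ)) * acoef g n n := by
  rw [acoef]; simp

lemma acoef_rec (g : ℝ) {n m : ℕ} (hm : m ≠ 0) (h : m < n) :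
    acoef g n m = (1 / (2 * g * (m : ℝ))) *
      (4 * (((m + 1) / 2 : ℕ) : ℝ) ^ 2 * acoef g n (m + 1)
        - g ^ 2 * ∑ k ∈ Finset.Icc (m - 1) (n - 1),
            ((n - k + 1 : ℕ) : ℝ) * acoef g k (m - 1)) := by
  rw [acoef, if_neg hm, if_neg (by omega), if_neg (by omega),
    Finset.sum_attach (Finset.Icc (m - 1) (n - 1))
      (fun k => ((n - k + 1 : ℕ) : ℝ) * acoef g k (m - 1))]

lemma acoef_scale (g : ℝ) (hg : 0 < g) (n : ℕ) : ∀ m, acoef g n m = g ^ m * acoef 1 n m := by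
  induction n using Nat.strong_induction_on with
  | _ n ih =>
    have key : ∀ d m, n - m = d → acoef g n m = g ^ m * acoef 1 n m := by
      intro d
      induction d with
      | zero =>
        intro m hd
        rcases Nat.lt_or_ge n m with h | h
        · simp [acoef_gt _ h]
        · have : m = n := by omega
          subst this
          cases m with
          | zero => simp [acoef_zero]
          | succ m => rw [acoef_diag, acoef_diag, ih m (by omega)]; ring
      | succ d ihd =>
        intro m hd
        rcases Nat.eq_zero_or_pos m with rfl | hm
        · simp [acoef_zero]
        · rw [acoef_rec g hm.ne' (by omega), acoef_rec 1 hm.ne' (by omega), ihd (m + 1) (by omega)]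
          have hs : ∑ k ∈ Finset.Icc (m - 1) (n - 1), ((n - k + 1 : ℕ) : ℝ) * acoef g k (m - 1)
              = g ^ (m - 1) * ∑ k ∈ Finset.Icc (m - 1) (n - 1),
                ((n - k + 1 : ℕ) : ℝ) * acoef 1 k (m - 1) := by
            rw [Finset.mul_sum]
            refine Finset.sum_congr rfl fun k hk => ?_
            rw [Finset.mem_Icc] at hk
            rw [ih k (by omega)]; ring
          rw [hs]
          obtain ⟨j, rfl⟩ := Nat.exists_eq_succ_of_ne_zero hm.ne'
          have : ((j.succ : ℕ) : ℝ) ≠ 0 := by positivity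
          simp only [Nat.succ_eq_add_one, Nat.add_sub_cancel] at *
          field_simp
          ring
    intro m
    exact key _ m rfl

lemma sum_aux (n : ℕ) : ∑ k ∈ Finset.range n, ((n - k + 1 : ℕ) : ℝ) = n * (n + 3) / 2 := by
  have h := Finset.sum_range_reflect (fun k => ((k + 2 : ℕ) : ℝ)) n
  have h2 : ∀ n : ℕ, ∑ k ∈ Finset.range n, ((k + 2 : ℕ) : ℝ) = n * (n + 3) / 2 := by
    intro n
    induction n with
    | zero => simp
    | succ n ih => rw [Finset.sum_range_succ, ih]; push_cast; ring
  rw [← h2 n, ← h]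
  refine Finset.sum_congr rfl fun k hk => ?_
  rw [Finset.mem_range] at hk
  congr 1; omega

lemma acoef_two (g : ℝ) (hg : 0 < g) (n : ℕ) :
    acoef g n 2 = g * acoef g n 1 / 2 + g ^ 2 * (n * (n + 3) / 8) := by
  rcases Nat.lt_or_ge 1 n with h | h
  · rw [acoef_rec g one_ne_zero h]
    have hI : Finset.Icc (1 - 1) (n - 1) = Finset.range n := by
      ext k; simp; omega
    rw [hI]
    simp only [Nat.sub_self, acoef_zero, mul_one, sum_aux]
    norm_num
    field_simp
    ring
  · interval_cases n
    · simp [acoef_gt]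
    · rw [acoef_gt g (by norm_num : 1 < 2), acoef_diag g 0, acoef_zero]
      norm_num; ring

lemma exp_v (g : ℝ) (n : ℕ) : EvenExp (vPol g n) 1 (acoef g n 2) := by
  refine (EvenExp.poly (fun m => acoef g n (2 * m)) (n / 2 + 1) ?_).congr
    (fun _ _ => rfl) ?_ rfl
  · intro m hm; exact acoef_gt _ (by omega)
  · simp [acoef_zero]

lemma exp_w (g : ℝ) (n : ℕ) :
    ∃ f, EvenExp f (acoef g n 1) (acoef g n 3) ∧ ∀ r, wPol g n r = r * f r := by
  refine ⟨_, EvenExp.poly (fun m => acoef g n (2 * m + 1)) ((n - 1) / 2 + 1) ?_, ?_⟩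
  · intro m hm; exact acoef_gt _ (by omega)
  · intro r
    unfold wPol
    rw [Finset.mul_sum]
    exact Finset.sum_congr rfl fun k _ => by ring

lemma sum_Icc_aux (N : ℕ) (f : ℕ → ℝ) (h : f 0 = 0) :
    ∑ m ∈ Finset.Icc 1 N, f m = ∑ m ∈ Finset.range (N + 1), f m := by
  refine Finset.sum_subset ?_ ?_
  · intro m hm
    rw [Finset.mem_Icc] at hm
    rw [Finset.mem_range]
    omega
  · intro m hm hm'
    simp at hm hm'
    have : m = 0 := by omega
    rw [this, h]

lemma exp_vt (g : ℝ) (n : ℕ) :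
    EvenExp (vTil g n) 0 (2 * acoef g n 2 - g * acoef g n 1) := by
  have h1 := EvenExp.poly (fun m => (m : ℝ) * acoef g n (2 * m)) (n / 2 + 1)
    (fun m hm => by simp [acoef_gt g (show n < 2 * m by omega)])
  have h2 := EvenExp.poly (fun m => acoef g n (2 * m + 1)) ((n - 1) / 2 + 1)
    (fun m hm => acoef_gt _ (by omega))
  refine ((h1.cmul 2).sub ((EvenExp.sq.mul h2).cmul g)).congr ?_ ?_ ?_
  · intro r _
    unfold vTil
    rw [sum_Icc_aux _ _ (by simp), Finset.mul_sum _ _ (r ^ 2)]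
    congr 2
    exact Finset.sum_congr rfl fun k _ => by ring
  · simp
  · simp

lemma exp_wt (g : ℝ) (n : ℕ) : ∃ f, EvenExp f (-g) (2 * acoef g n 3 - g * acoef g n 2) ∧
    ∀ r, wTil g n r = r * f r := by
  have h1 := EvenExp.poly (fun m => (m : ℝ) * acoef g n (2 * m + 1)) ((n - 1) / 2 + 1)
    (fun m hm => by simp [acoef_gt g (show n < 2 * m + 1 by omega)])
  have h2 := EvenExp.poly (fun m => acoef g n (2 * m)) (n / 2 + 1)
    (fun m hm => acoef_gt _ (by omega))
  refine ⟨_, ((h1.cmul 2).sub (h2.cmul g)).congr (fun _ _ => rfl) ?_ ?_, ?_⟩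
  · simp [acoef_zero]
  · simp
  · intro r
    unfold wTil
    rw [sum_Icc_aux _ _ (by simp), mul_sub, mul_left_comm r 2, mul_left_comm r g,
      Finset.mul_sum _ _ r, Finset.mul_sum _ _ r]
    congr 2 <;> exact Finset.sum_congr rfl fun k _ => by ring

/-- Common shape of `phiHat` and `phiHatTil`. -/
lemma exp_comb (g : ℝ) (hg : 0 < g) (L : ℝ) (V W f : ℝ → ℝ) (v0 v1 w0 w1 : ℝ)
    (hV : EvenExp V v0 v1) (hf : EvenExp f w0 w1) (hW : ∀ r, W r = r * f r) :
    EvenExp (fun r => (-L * besselI0 (g * r) + besselS0 (g * r)) * V r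
      + (1 / (g * r) + L * besselI1 (g * r) + besselS1 (g * r)) * W r)
      (-L * v0 + w0 / g)
      (-L * v1 + (1 - L) * (g ^ 2 / 4) * v0 + w1 / g + (L * g / 2 - g / 4) * w0) := by
  obtain ⟨i, bi, hi, hI⟩ := exp_I1 g
  obtain ⟨s, bs, hs, hS⟩ := exp_S1 g
  have h1 := (((exp_I0 g).cmul (-L)).add (exp_S0 g)).mul hV
  have h2 := ((EvenExp.const (1 / g)).add (EvenExp.sq.mul ((hi.cmul L).add hs))).mul hf
  refine (h1.add h2).congr ?_ ?_ ?_
  · intro r hr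
    rw [hI, hS, hW]
    field_simp
    ring
  · ring
  · ring

lemma exp_D (g : ℝ) (hg : 0 < g) (n : ℕ) :
    EvenExp (fun r => phiHatTil g n r - 2 * phiHat g n r)
      (-1 + 2 * (Real.eulerMascheroniConstant + Real.log (g / 2)) - 2 * acoef 1 n 1)
      (-g ^ 2 * (n * (n + 3) / 8 + 1 / 4)) ∧
    ∃ b, EvenExp (phiHatTil g n) (-1) b := by
  obtain ⟨w, hw, hW⟩ := exp_w g n
  obtain ⟨wt, hwt, hWt⟩ := exp_wt g n
  have h1 := exp_comb g hg (Real.eulerMascheroniConstant + Real.log (g / 2)) _ _ _ _ _ _ _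
    (exp_v g n) hw hW
  have h2 := exp_comb g hg (Real.eulerMascheroniConstant + Real.log (g / 2)) _ _ _ _ _ _ _
    (exp_vt g n) hwt hWt
  refine ⟨(h2.sub (h1.cmul 2)).congr (fun _ _ => rfl) ?_ ?_,
    _, h2.congr (fun _ _ => rfl) ?_ rfl⟩
  · rw [acoef_scale g hg n 1]; field_simp; ring
  · rw [acoef_two g hg n]; field_simp; ring
  · field_simp; ring

lemma exp_sumChi (n : ℕ) (F : ℕ → ℝ → ℝ) (A B : ℕ → ℝ)
    (h : ∀ j, EvenExp (F j) (A j) (B j)) :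
    EvenExp (fun r => sumChi n (fun j => F j r)) (sumChi n A) (sumChi n B) := by
  unfold sumChi
  refine EvenExp.sum _ fun k _ => ?_
  split_ifs with hk
  · exact (h _).cmul _
  · exact EvenExp.const 0

lemma sumChi_eq (n : ℕ) (q : ℝ → ℝ) : sumChi n (fun j => q j) =
    n * (n - 1) * q (n - 2) - 4 * n ^ 2 * q (n - 1)
      + 2 * (3 * n ^ 2 + 3 * n + 1) * q n - 4 * (n + 1) ^ 2 * q (n + 1)
      + (n + 1) * (n + 2) * q (n + 2) := by
  have hI : Finset.Icc (-2 : ℤ) 2 = {-2, -1, 0, 1, 2} := by decide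
  have hcast : ∀ k : ℤ, 0 ≤ (n : ℤ) + k → ((((n : ℤ) + k).toNat : ℕ) : ℝ) = n + k := by
    intro k hk
    have : ((((n : ℤ) + k).toNat : ℤ) : ℝ) = ((n + k : ℤ) : ℝ) := by rw [Int.toNat_of_nonneg hk]
    push_cast at this
    exact_mod_cast this
  have hterm : ∀ k : ℤ, (if 0 ≤ (n : ℤ) + k then chiC n k * q ((((n : ℤ) + k).toNat : ℕ) : ℝ)
      else 0) = if 0 ≤ (n : ℤ) + k then chiC n k * q (n + k) else 0 := by
    intro k
    split_ifs with hk
    · rw [hcast k hk]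
    · rfl
  have h0 : ∀ k : ℤ, k ∈ Finset.Icc (-2 : ℤ) 2 →
      (if 0 ≤ (n : ℤ) + k then chiC n k * q (n + k) else 0) = chiC n k * q (n + k) := by
    intro k hk
    rw [Finset.mem_Icc] at hk
    split_ifs with h
    · rfl
    · have : chiC n k = 0 := by
        have h1 : (k = -2 ∧ (n = 0 ∨ n = 1)) ∨ (k = -1 ∧ n = 0) := by omega
        rcases h1 with ⟨rfl, rfl | rfl⟩ | ⟨rfl, rfl⟩ <;> simp [chiC]
      rw [this]; ring
  unfold sumChi
  rw [Finset.sum_congr rfl fun k hk => (hterm k).trans (h0 k hk), hI]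
  simp [chiC]
  ring_nf

/-- ξ̃_{2,n}(r) = O(r²) as r → 0⁺. -/
theorem xiTil_two_asymptotics (κ cs cp : ℝ) (hκ : 0 < κ) (hcs : 0 < cs) (hcp : 0 < cp) (n : ℕ) :
    (∃ ε > (0 : ℝ), ∃ M > (0 : ℝ), ∀ r : ℝ, 0 < r → r < ε →
      |xiTil κ cs cp 2 n r| ≤ M * r ^ 2) ∧
    Tendsto (fun r => xiTil κ cs cp 2 n r) (nhdsWithin 0 (Set.Ioi 0)) (nhds 0) := by
  have hgs : 0 < κ / cs := by positivity
  have hgp : 0 < κ / cp := by positivity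
  have hS := exp_sumChi n _ _ _ (fun j => (exp_D _ hgs j).1.sub (exp_D _ hgp j).1)
  set d : ℝ := 2 * (Real.log (κ / cs / 2) - Real.log (κ / cp / 2)) with hd
  set e : ℝ := (κ / cs) ^ 2 - (κ / cp) ^ 2 with he
  have hS' : EvenExp (fun r => sumChi n (fun j => phiHatTil (κ / cs) j r - 2 * phiHat (κ / cs) j r
        + 2 * phiHat (κ / cp) j r - phiHatTil (κ / cp) j r)) 0 (-e / 2) := by
    refine hS.congr ?_ ?_ ?_
    · intro r _
      congr 1; ext j; ring
    · have h := sumChi_eq n (fun _ => d)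
      trans sumChi n (fun _ => d)
      · rw [h]; ring
      · congr 1; ext j; rw [hd]; ring
    · have h := sumChi_eq n (fun x => -e * (x * (x + 3) / 8 + 1 / 4))
      trans sumChi n (fun j => -e * ((j : ℝ) * (j + 3) / 8 + 1 / 4))
      · rw [h]; ring
      · congr 1; ext j; rw [he]; ring
  obtain ⟨bs, hbs⟩ := (exp_D _ hgs n).2
  obtain ⟨bp, hbp⟩ := (exp_D _ hgp n).2
  have h2 : EvenExp (fun r => r ^ 2 * xiTil κ cs cp 2 n r) 0 0 := by
    refine ((hS'.cmul (-2 / κ ^ 2)).add (EvenExp.sq.mul ((hbp.cmul (-1 / cp ^ 2)).add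
      (hbs.cmul (1 / cs ^ 2))))).congr ?_ ?_ ?_
    · intro r hr
      unfold xiTil
      generalize sumChi n _ = S
      norm_num
      field_simp
      ring
    · ring
    · rw [he]; field_simp; ring
  have hO : (fun r => xiTil κ cs cp 2 n r) =O[nhdsWithin 0 (Set.Ioi 0)] (fun r : ℝ => r ^ 2) := by
    have h3 := (Asymptotics.isBigO_refl (fun r : ℝ => (r ^ 2)⁻¹)
      (nhdsWithin 0 (Set.Ioi 0))).mul h2
    refine h3.congr' ?_ ?_
    · filter_upwards [self_mem_nhdsWithin] with r hr
      have : r ≠ 0 := ne_of_gt hr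
      field_simp
      ring
    · filter_upwards [self_mem_nhdsWithin] with r hr
      have : r ≠ 0 := ne_of_gt hr
      field_simp
  refine ⟨?_, ?_⟩
  · obtain ⟨M, hM, hb⟩ := hO.exists_pos
    have hb' := hb.bound
    rw [eventually_nhdsWithin_iff, Metric.eventually_nhds_iff] at hb'
    obtain ⟨ε, hε, h⟩ := hb'
    refine ⟨ε, hε, M, hM, fun r hr hr' => ?_⟩
    have := h (y := r) (by simpa [abs_of_pos hr] using hr') hr
    simpa using this
  · refine hO.trans_tendsto ?_
    have h : Tendsto (fun r : ℝ => r ^ 2) (nhdsWithin 0 (Set.Ioi 0)) (nhds (0 ^ 2)) :=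
      ((continuous_pow 2).tendsto 0).mono_left nhdsWithin_le_nhds
    simpa using h
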